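/- Let n ≥ 2 be an integer, let γ ⊆ {1,…,n} have cardinality k with 1 ≤ k ≤ n−1, and let 0 < σ²_min < σ²_max. Define the region R = {c ∈ ℝⁿ : σ²_min ≤ S_γ(c)/k ≤ σ²_max and σ²_min ≤ (S(c) − S_γ(c))/(n−k) ≤ σ²_max}. Then ∫_R S_γ(c)^{−k/2} · (S(c) − S_γ(c))^{−(n−k)/2} dc = π^{n/2} / (Γ(k/2) Γ((n−k)/2)) · (ln(σ²_max/σ²_min))². -/

import Mathlib

open MeasureTheory Real Finset

/-- `Sg γ c = ∑_{i ∈ γ} c_i²`. -/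
noncomputable def Sg {n : ℕ} (γ : Finset (Fin n)) (c : Fin n → ℝ) : ℝ :=
  ∑ i ∈ γ, (c i) ^ 2

/-- `Stot c = ∑_{i=1}^n c_i²`. -/
noncomputable def Stot {n : ℕ} (c : Fin n → ℝ) : ℝ :=
  ∑ i, (c i) ^ 2

/-!
The integrand and the region depend on `c` only through its two blocks of coordinates, so Fubini
reduces the claim to one block of `d` coordinates. There, polar coordinates and the substitution
`t = r ^ 2` show that the squared norm pushes Lebesgue measure on `ℝᵈ` forward to
`π ^ (d / 2) / Γ(d / 2) * t ^ (d / 2 - 1) dt`. The weight `t ^ (-d / 2)` turns this density into a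
multiple of the scale-invariant `dt / t`, so the block means may replace the block sums and the
shell contributes the logarithm of the ratio of its bounds.
-/

open Module

section Radial

variable {E F : Type*} [NormedAddCommGroup E] [InnerProductSpace ℝ E] [FiniteDimensional ℝ E]
  [Nontrivial E] [MeasurableSpace E] [BorelSpace E] [NormedAddCommGroup F] [NormedSpace ℝ F]

lemma finrank_mul_volume_real_ball_zero_one :
    finrank ℝ E * volume.real (Metric.ball (0 : E) 1) =
      2 * π ^ (finrank ℝ E / 2 : ℝ) / Gamma (finrank ℝ E / 2) := by
  have hd : (0 : ℝ) < finrank ℝ E := mod_cast finrank_pos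
  have hsqrt : √π ^ finrank ℝ E = π ^ (finrank ℝ E / 2 : ℝ) := by
    rw [sqrt_eq_rpow, ← rpow_mul_natCast pi_pos.le, one_div_mul_eq_div]
  rw [measureReal_def, InnerProductSpace.volume_ball, ENNReal.ofReal_one, one_pow, one_mul,
    hsqrt, Gamma_add_one (by positivity), ENNReal.toReal_ofReal (by positivity)]
  field_simp

theorem integral_fun_norm_sq (f : ℝ → F) :
    ∫ x : E, f (‖x‖ ^ 2) = (π ^ (finrank ℝ E / 2 : ℝ) / Gamma (finrank ℝ E / 2)) •
      ∫ t in Set.Ioi (0 : ℝ), t ^ (finrank ℝ E / 2 - 1 : ℝ) • f t := by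
  set C : ℝ := π ^ (finrank ℝ E / 2 : ℝ) / Gamma (finrank ℝ E / 2)
  let g : ℝ → F := fun t ↦ t ^ (finrank ℝ E / 2 - 1 : ℝ) • f t
  have hpow {r : ℝ} (hr : 0 < r) :
      r ^ (2 - 1 : ℝ) * (r ^ (2 : ℝ)) ^ (finrank ℝ E / 2 - 1 : ℝ) = r ^ (finrank ℝ E - 1) := by
    rw [← rpow_mul hr.le, ← rpow_add hr, ← rpow_natCast, Nat.cast_pred finrank_pos]
    ring_nf
  have hsubst : ∀ r ∈ Set.Ioi (0 : ℝ),
      (2 : ℝ) • r ^ (finrank ℝ E - 1) • f (r ^ 2) = (2 * r ^ (2 - 1 : ℝ)) • g (r ^ (2 : ℝ)) := by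
    intro r hr
    simp only [g]
    rw [smul_smul, smul_smul, mul_assoc, hpow hr, rpow_two]
  calc ∫ x : E, f (‖x‖ ^ 2)
    _ = (C * 2) • ∫ r in Set.Ioi (0 : ℝ), r ^ (finrank ℝ E - 1) • f (r ^ 2) := by
        rw [integral_fun_norm_addHaar volume fun r ↦ f (r ^ 2), ← Nat.cast_smul_eq_nsmul ℝ,
          smul_smul, finrank_mul_volume_real_ball_zero_one, mul_div_assoc, mul_comm]
    _ = C • ∫ r in Set.Ioi (0 : ℝ), (2 * r ^ (2 - 1 : ℝ)) • g (r ^ (2 : ℝ)) := by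
        rw [mul_smul, ← integral_smul, setIntegral_congr_fun measurableSet_Ioi hsubst]
    _ = C • ∫ t in Set.Ioi (0 : ℝ), g t := by rw [integral_comp_rpow_Ioi_of_pos two_pos]

theorem integral_fun_sum_sq {ι : Type*} [Fintype ι] [Nonempty ι] (f : ℝ → F) :
    ∫ x : ι → ℝ, f (∑ i, x i ^ 2) =
      (π ^ (Fintype.card ι / 2 : ℝ) / Gamma (Fintype.card ι / 2)) •
        ∫ t in Set.Ioi (0 : ℝ), t ^ (Fintype.card ι / 2 - 1 : ℝ) • f t := by
  rw [← (EuclideanSpace.volume_preserving_symm_measurableEquiv_toLp ι).integral_comp',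
    ← finrank_euclideanSpace (𝕜 := ℝ), ← integral_fun_norm_sq]
  simp only [EuclideanSpace.real_norm_sq_eq, MeasurableEquiv.coe_toLp_symm]

end Radial

lemma setIntegral_Icc_inv {a b : ℝ} (ha : 0 < a) (hab : a ≤ b) :
    ∫ t in Set.Icc a b, t⁻¹ = log (b / a) := by
  rw [integral_Icc_eq_integral_Ioc, ← intervalIntegral.integral_of_le hab,
    integral_inv_of_pos ha (ha.trans_le hab)]

theorem setIntegral_sum_sq_mem_Icc_rpow {ι : Type*} [Fintype ι] [Nonempty ι] {a b : ℝ}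
    (ha : 0 < a) (hab : a ≤ b) :
    ∫ x in {x : ι → ℝ | ∑ i, x i ^ 2 ∈ Set.Icc a b}, (∑ i, x i ^ 2) ^ (-(Fintype.card ι : ℝ) / 2) =
      π ^ (Fintype.card ι / 2 : ℝ) / Gamma (Fintype.card ι / 2) * log (b / a) := by
  set d : ℝ := (Fintype.card ι : ℝ)
  have hmeas : MeasurableSet {x : ι → ℝ | ∑ i, x i ^ 2 ∈ Set.Icc a b} :=
    measurableSet_Icc.preimage (by fun_prop)
  have hsub : Set.Icc a b ⊆ Set.Ioi 0 := fun t ht ↦ ha.trans_le ht.1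
  have hpow : ∀ t ∈ Set.Icc a b, t ^ (d / 2 - 1) * t ^ (-d / 2) = t⁻¹ := by
    intro t ht
    rw [← rpow_add (hsub ht), ← rpow_neg_one]
    ring_nf
  calc ∫ x in {x : ι → ℝ | ∑ i, x i ^ 2 ∈ Set.Icc a b}, (∑ i, x i ^ 2) ^ (-d / 2)
    _ = ∫ x : ι → ℝ, (Set.Icc a b).indicator (fun t ↦ t ^ (-d / 2)) (∑ i, x i ^ 2) :=
        (integral_indicator hmeas).symm
    _ = π ^ (d / 2) / Gamma (d / 2) *
          ∫ t in Set.Ioi 0, (Set.Icc a b).indicator (fun t ↦ t ^ (d / 2 - 1) * t ^ (-d / 2)) t := by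
        simp only [integral_fun_sum_sq, smul_eq_mul, Set.indicator_mul_right, d]
    _ = π ^ (d / 2) / Gamma (d / 2) * ∫ t in Set.Icc a b, t⁻¹ := by
        rw [setIntegral_indicator measurableSet_Icc, Set.inter_eq_right.2 hsub,
          setIntegral_congr_fun measurableSet_Icc hpow]
    _ = π ^ (d / 2) / Gamma (d / 2) * log (b / a) := by rw [setIntegral_Icc_inv ha hab]

theorem setIntegral_sum_sq_div_card_mem_Icc_rpow {ι : Type*} [Fintype ι] [Nonempty ι] {a b : ℝ}
    (ha : 0 < a) (hab : a ≤ b) :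
    ∫ x in {x : ι → ℝ | (∑ i, x i ^ 2) / Fintype.card ι ∈ Set.Icc a b},
        (∑ i, x i ^ 2) ^ (-(Fintype.card ι : ℝ) / 2) =
      π ^ (Fintype.card ι / 2 : ℝ) / Gamma (Fintype.card ι / 2) * log (b / a) := by
  have hcard : (0 : ℝ) < Fintype.card ι := mod_cast Fintype.card_pos
  have hshell := setIntegral_sum_sq_mem_Icc_rpow (ι := ι) (mul_pos ha hcard)
    (mul_le_mul_of_nonneg_right hab hcard.le)
  simpa only [Set.mem_Icc, le_div_iff₀ hcard, div_le_iff₀ hcard,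
    mul_div_mul_right _ _ hcard.ne'] using hshell

theorem setIntegral_pi_subtype_mul {ι 𝕜 : Type*} [Fintype ι] [RCLike 𝕜] {X : ι → Type*}
    [∀ i, MeasurableSpace (X i)] (μ : ∀ i, Measure (X i)) [∀ i, SigmaFinite (μ i)]
    (p : ι → Prop) [Fintype {i // p i}] [Fintype {i // ¬p i}] (f : (∀ i : {i // p i}, X i) → 𝕜)
    (g : (∀ i : {i // ¬p i}, X i) → 𝕜) (s : Set (∀ i : {i // p i}, X i))
    (t : Set (∀ i : {i // ¬p i}, X i)) :
    ∫ x in {x | (fun i : {i // p i} ↦ x i) ∈ s ∧ (fun i : {i // ¬p i} ↦ x i) ∈ t},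
        f (fun i ↦ x i) * g (fun i ↦ x i) ∂Measure.pi μ =
      (∫ y in s, f y ∂Measure.pi fun i : {i // p i} ↦ μ i) *
        ∫ z in t, g z ∂Measure.pi fun i : {i // ¬p i} ↦ μ i := by
  classical
  rw [← setIntegral_prod_mul]
  convert (measurePreserving_piEquivPiSubtypeProd μ p).setIntegral_preimage_emb
    (MeasurableEquiv.measurableEmbedding _) (fun z ↦ f z.1 * g z.2) (s ×ˢ t) <;> rfl

theorem stmt_0_general {ι : Type*} [Fintype ι] [DecidableEq ι] {s : Finset ι} (hs : s.Nonempty)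
    (hsc : sᶜ.Nonempty) {a b a' b' : ℝ} (ha : 0 < a) (hab : a ≤ b) (ha' : 0 < a') (hab' : a' ≤ b') :
    ∫ c in {c : ι → ℝ | (∑ i ∈ s, c i ^ 2) / #s ∈ Set.Icc a b ∧
        (∑ i ∈ sᶜ, c i ^ 2) / #sᶜ ∈ Set.Icc a' b'},
      (∑ i ∈ s, c i ^ 2) ^ (-(#s : ℝ) / 2) * (∑ i ∈ sᶜ, c i ^ 2) ^ (-(#sᶜ : ℝ) / 2) =
    π ^ (Fintype.card ι / 2 : ℝ) / (Gamma (#s / 2) * Gamma (#sᶜ / 2)) *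
      (log (b / a) * log (b' / a')) := by
  have : Nonempty {i // i ∈ s} := nonempty_subtype.2 hs
  have : Nonempty {i // i ∉ s} := nonempty_subtype.2 (hsc.imp fun _ ↦ mem_compl.1)
  have hcard : Fintype.card {i // i ∈ s} = #s := Fintype.card_of_subtype s fun _ ↦ Iff.rfl
  have hcardc : Fintype.card {i // i ∉ s} = #sᶜ := Fintype.card_of_subtype _ fun _ ↦ mem_compl
  have hshell := setIntegral_sum_sq_div_card_mem_Icc_rpow (ι := {i // i ∈ s}) ha hab
  have hshellc := setIntegral_sum_sq_div_card_mem_Icc_rpow (ι := {i // i ∉ s}) ha' hab'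
  rw [hcard] at hshell
  rw [hcardc] at hshellc
  have hpi : π ^ (Fintype.card ι / 2 : ℝ) = π ^ (#s / 2 : ℝ) * π ^ (#sᶜ / 2 : ℝ) := by
    rw [← rpow_add pi_pos, ← add_div, ← Nat.cast_add, card_add_card_compl]
  have hsplit := setIntegral_pi_subtype_mul (fun _ : ι ↦ (volume : Measure ℝ)) (· ∈ s)
    (fun x ↦ (∑ i, x i ^ 2) ^ (-(#s : ℝ) / 2)) (fun x ↦ (∑ i, x i ^ 2) ^ (-(#sᶜ : ℝ) / 2))
    {x | (∑ i, x i ^ 2) / #s ∈ Set.Icc a b} {x | (∑ i, x i ^ 2) / #sᶜ ∈ Set.Icc a' b'}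
  simp only [← volume_pi, Set.mem_ofPred_eq] at hsplit
  simp only [Finset.sum_subtype s (fun _ ↦ Iff.rfl), Finset.sum_subtype sᶜ (fun _ ↦ mem_compl)]
  rw [hsplit, hshell, hshellc, hpi]
  ring

lemma stot_sub_sg {n : ℕ} (γ : Finset (Fin n)) (c : Fin n → ℝ) :
    Stot c - Sg γ c = ∑ i ∈ γᶜ, c i ^ 2 :=
  sub_eq_of_eq_add' (sum_add_sum_compl γ _).symm

theorem stmt_0 (n k : ℕ) (hn : 2 ≤ n) (γ : Finset (Fin n)) (hγ : γ.card = k)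
    (hk1 : 1 ≤ k) (hk2 : k ≤ n - 1) (σmin σmax : ℝ) (h0 : 0 < σmin) (hσ : σmin < σmax) :
    ∫ c in {c : Fin n → ℝ |
        σmin ≤ Sg γ c / k ∧ Sg γ c / k ≤ σmax ∧
        σmin ≤ (Stot c - Sg γ c) / ((n : ℝ) - k) ∧
        (Stot c - Sg γ c) / ((n : ℝ) - k) ≤ σmax},
      (Sg γ c) ^ (-(k : ℝ) / 2) * (Stot c - Sg γ c) ^ (-((n : ℝ) - k) / 2)
    = Real.pi ^ ((n : ℝ) / 2) / (Real.Gamma ((k : ℝ) / 2) * Real.Gamma (((n : ℝ) - k) / 2))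
      * (Real.log (σmax / σmin)) ^ 2 := by
  subst hγ
  have hcompl : (n : ℝ) - #γ = #γᶜ := by
    rw [card_compl, Fintype.card_fin, Nat.cast_sub (by omega)]
  have hcompl_pos : 0 < #γᶜ := by rw [card_compl, Fintype.card_fin]; omega
  simp only [stot_sub_sg, hcompl]
  simpa only [Sg, Set.mem_Icc, and_assoc, Fintype.card_fin, sq (log _)] using
    stmt_0_general (card_pos.1 hk1) (card_pos.1 hcompl_pos) h0 hσ.le h0 hσ.le
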